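/- Let ℓ ≥ 2, 1 ≤ i ≤ ℓ, and fix real β, δ > 0. Let g(δ) = ⌊(δ·log₂ℓ + log₂6)/(log₂3 − 1)⌋. If z ∈ [0,1) satisfies z < i/ℓ − g(δ)/ℓ − (β·ln ℓ/(2ℓ))^{1/2}, then F_i(z) < ℓ^{−β} + ℓ^{−δ}. -/

import Mathlib

/-!
Conditionally on `s` erasures, an `(ℓ - s)`-dimensional subspace `R` meets `E_i` in dimension at
least `i - s`, and `R` avoids `E_i \ E_{i-1}` exactly when `R ∩ E_i` lies in the hyperplane
`E_{i-1}` of `E_i`. This hyperplane is moved around by the `2 ^ (ℓ - 1)` transvections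
`x ↦ x + f x • e_i` with `f e_i = 0`, all of which preserve `E_i`; averaging over them gives
`p_{i|s} ≤ 2 * 2 ^ (-(i - s))` (`card_avoiding_le`, `pis_le_pow`).

With `x = (δ log₂ ℓ + log₂ 6) / (log₂ 3 - 1)` and `g = ⌊x⌋`, the sum defining `F_i(z)` is split at
`s = i - g`. For `s ≥ i - g` the factor `p_{i|s}` is at most `1`, and the hypothesis on `z` together
with Hoeffding's inequality (`binomial_tail_le`) bounds the binomial tail by `ℓ ^ (-β)`.
For `s < i - g` one has `i - s ≥ g + 1 > x ≥ δ log₂ ℓ + log₂ 6`, so that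
`p_{i|s} ≤ 2 * ℓ ^ (-δ) / 6 < ℓ ^ (-δ)`.
-/

open scoped Classical

noncomputable section

/-- `E_j`: the span of the first `j` standard basis vectors of `F₂^ℓ`. -/
def Ej (ℓ j : ℕ) : Submodule (ZMod 2) (Fin ℓ → ZMod 2) :=
  Submodule.span (ZMod 2) {v | ∃ k : Fin ℓ, (k : ℕ) < j ∧ v = Pi.single k 1}

/-- The average conditional erasure probability `p_{i|s}` (with `i` 1-indexed): the fraction
of `(ℓ-s)`-dimensional subspaces `R` of `F₂^ℓ` with `R ∩ (E_i \ E_{i-1}) = ∅`. -/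
def pis (ℓ i s : ℕ) : ℝ :=
  (Nat.card {R : Submodule (ZMod 2) (Fin ℓ → ZMod 2) //
      Module.finrank (ZMod 2) ↥R = ℓ - s ∧
      (R : Set (Fin ℓ → ZMod 2)) ∩ ((Ej ℓ i : Set (Fin ℓ → ZMod 2)) \
        (Ej ℓ (i - 1) : Set (Fin ℓ → ZMod 2))) = ∅} : ℝ) /
  (Nat.card {R : Submodule (ZMod 2) (Fin ℓ → ZMod 2) //
      Module.finrank (ZMod 2) ↥R = ℓ - s} : ℝ)

/-- The 2-Gaussian binomial coefficient `[a choose t]₂`, as a real number. -/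
def gaussBinom (a t : ℕ) : ℝ :=
  ∏ j ∈ Finset.range t, ((2 ^ a - 2 ^ j : ℝ) / (2 ^ t - 2 ^ j : ℝ))

/-- The average erasure probability `F_i(z)` of the `i`-th bit-channel (`i` 1-indexed). -/
def Favg (ℓ i : ℕ) (z : ℝ) : ℝ :=
  ∑ s ∈ Finset.range (ℓ + 1), (Nat.choose ℓ s : ℝ) * z ^ s * (1 - z) ^ (ℓ - s) * pis ℓ i s

/-! ### Subspaces avoiding `E_i \ E_{i-1}` -/

theorem mem_Ej_iff (ℓ j : ℕ) (v : Fin ℓ → ZMod 2) :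
    v ∈ Ej ℓ j ↔ ∀ k : Fin ℓ, j ≤ k → v k = 0 := by
  constructor
  · intro hv
    unfold Ej at hv
    induction hv using Submodule.span_induction with
    | mem x hx =>
      obtain ⟨k, hk, rfl⟩ := hx
      intro m hm
      rw [Pi.single_apply, if_neg]
      rintro rfl
      omega
    | zero => intro k _; rfl
    | add x y _ _ hx hy => intro k hk; simp [hx k hk, hy k hk]
    | smul a x _ hx => intro k hk; simp [hx k hk]
  · intro h
    rw [← Finset.univ_sum_single v]
    refine Submodule.sum_mem _ fun k _ => ?_
    by_cases hk : (k : ℕ) < j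
    · have : Pi.single k (v k) = v k • (Pi.single k 1 : Fin ℓ → ZMod 2) := by
        rw [← Pi.single_smul]; simp
      rw [this]
      exact Submodule.smul_mem _ _ (Submodule.subset_span ⟨k, hk, rfl⟩)
    · rw [h k (by omega)]
      simp

theorem le_finrank_Ej (ℓ j : ℕ) (hj : j ≤ ℓ) :
    j ≤ Module.finrank (ZMod 2) (Ej ℓ j) := by
  have hli : LinearIndependent (ZMod 2)
      (fun k : Fin j => (Pi.single (Fin.castLE hj k) 1 : Fin ℓ → ZMod 2)) := by
    have h := (Pi.basisFun (ZMod 2) (Fin ℓ)).linearIndependent.comp _ (Fin.castLE_injective hj)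
    convert h using 1
    ext k : 1
    simp
  have h2 : Module.finrank (ZMod 2) (Submodule.span (ZMod 2)
      (Set.range (fun k : Fin j => (Pi.single (Fin.castLE hj k) 1 : Fin ℓ → ZMod 2)))) = j := by
    simpa using finrank_span_eq_card hli
  calc j = _ := h2.symm
    _ ≤ _ := Submodule.finrank_mono (Submodule.span_mono (by
      rintro _ ⟨k, rfl⟩
      exact ⟨Fin.castLE hj k, by simp, rfl⟩))

theorem inter_diff_eq_empty_iff (ℓ i : ℕ) (R : Submodule (ZMod 2) (Fin ℓ → ZMod 2)) :
    (R : Set (Fin ℓ → ZMod 2)) ∩ ((Ej ℓ i : Set (Fin ℓ → ZMod 2)) \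
        (Ej ℓ (i - 1) : Set (Fin ℓ → ZMod 2))) = ∅ ↔
      ∀ x ∈ R, x ∈ Ej ℓ i → x ∈ Ej ℓ (i - 1) := by
  rw [Set.eq_empty_iff_forall_notMem]
  refine forall_congr' fun x => ?_
  simp only [Set.mem_inter_iff, Set.mem_sdiff, SetLike.mem_coe]
  tauto

/-- Double counting over pairs of a transvection `x ↦ x + f x • e_i` and a subspace `R` of
dimension `ℓ - s` such that the image of `R` avoids `E_i \ E_{i-1}`. A given transvection, being a
bijection, is paired with at least as many `R` as there are avoiding subspaces. A given `R` is
paired with `f` only if `e_i^* + f` annihilates `R ∩ E_i`, whose dimension is at least `i - s`. -/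
theorem card_avoiding_le (ℓ i s : ℕ) (hi : 1 ≤ i) (hiℓ : i ≤ ℓ) :
    2 ^ (ℓ - 1) * Nat.card {R : Submodule (ZMod 2) (Fin ℓ → ZMod 2) //
      Module.finrank (ZMod 2) ↥R = ℓ - s ∧
      (R : Set (Fin ℓ → ZMod 2)) ∩ ((Ej ℓ i : Set (Fin ℓ → ZMod 2)) \
        (Ej ℓ (i - 1) : Set (Fin ℓ → ZMod 2))) = ∅} ≤
    Nat.card {R : Submodule (ZMod 2) (Fin ℓ → ZMod 2) //
      Module.finrank (ZMod 2) ↥R = ℓ - s} * 2 ^ (ℓ + s - i) := by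
  have hfinD : Finite (Module.Dual (ZMod 2) (Fin ℓ → ZMod 2)) := Module.finite_of_finite (ZMod 2)
  -- `e` is `e_i`; coordinates are indexed from `0`
  let p : Fin ℓ := ⟨i - 1, by omega⟩
  let e : (Fin ℓ → ZMod 2) := Pi.single p 1
  have he : e ≠ 0 := fun h => by simpa [e] using congrFun h p
  let D := (Submodule.span (ZMod 2) {e}).dualAnnihilator
  let _ : Fintype D := Fintype.ofFinite _
  let _ : Fintype (Submodule (ZMod 2) (Fin ℓ → ZMod 2)) := Fintype.ofFinite _
  have hD : ∀ f : D, (f : Module.Dual (ZMod 2) (Fin ℓ → ZMod 2)) e = 0 := fun f =>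
    (Submodule.mem_dualAnnihilator _).1 f.2 e (Submodule.mem_span_singleton_self e)
  have hcardD : Nat.card D = 2 ^ (ℓ - 1) := by
    have h1 := Subspace.finrank_add_finrank_dualAnnihilator_eq (Submodule.span (ZMod 2) {e})
    rw [finrank_span_singleton he] at h1
    have h2 : Module.finrank (ZMod 2) (Fin ℓ → ZMod 2) = ℓ := by simp
    rw [Module.natCard_eq_pow_finrank (K := ZMod 2), Nat.card_zmod]
    congr 1
    change Module.finrank (ZMod 2) (Submodule.span (ZMod 2) {e}).dualAnnihilator = _
    omega
  let g : D → ((Fin ℓ → ZMod 2) ≃ₗ[ZMod 2] (Fin ℓ → ZMod 2)) := fun f =>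
    LinearEquiv.transvection (hD f)
  have hg : ∀ f x, g f x = x + (f : Module.Dual (ZMod 2) (Fin ℓ → ZMod 2)) x • e := fun f x => rfl
  let bad : Submodule (ZMod 2) (Fin ℓ → ZMod 2) → Prop :=
    fun R => ∀ x ∈ R, x ∈ Ej ℓ i → x ∈ Ej ℓ (i - 1)
  let N : Finset (Submodule (ZMod 2) (Fin ℓ → ZMod 2)) :=
    {R | Module.finrank (ZMod 2) ↥R = ℓ - s}
  let B : Finset (Submodule (ZMod 2) (Fin ℓ → ZMod 2)) :=
    {R | Module.finrank (ZMod 2) ↥R = ℓ - s ∧ bad R}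
  let r : D → Submodule (ZMod 2) (Fin ℓ → ZMod 2) → Prop :=
    fun f R => bad (R.map (g f : (Fin ℓ → ZMod 2) →ₗ[ZMod 2] (Fin ℓ → ZMod 2)))
  have hN : Nat.card {R : Submodule (ZMod 2) (Fin ℓ → ZMod 2) //
      Module.finrank (ZMod 2) ↥R = ℓ - s} = N.card := by
    rw [Nat.card_eq_fintype_card, Fintype.card_subtype]
  have hB : Nat.card {R : Submodule (ZMod 2) (Fin ℓ → ZMod 2) //
      Module.finrank (ZMod 2) ↥R = ℓ - s ∧
      (R : Set (Fin ℓ → ZMod 2)) ∩ ((Ej ℓ i : Set (Fin ℓ → ZMod 2)) \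
        (Ej ℓ (i - 1) : Set (Fin ℓ → ZMod 2))) = ∅} = B.card := by
    rw [Nat.card_eq_fintype_card, Fintype.card_subtype]
    congr 1
    ext R
    simp only [Finset.mem_filter, Finset.mem_univ, true_and, B, bad, inter_diff_eq_empty_iff]
  rw [hN, hB, ← hcardD, Nat.card_eq_fintype_card, ← Finset.card_univ]
  refine Finset.card_mul_le_card_mul r (fun f _ => ?_) (fun R hR => ?_)
  · refine Finset.card_le_card_of_injOn
      (fun R => R.map ((g f).symm : (Fin ℓ → ZMod 2) →ₗ[ZMod 2] (Fin ℓ → ZMod 2)))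
      (fun R hR => ?_) ?_
    · have hR' : Module.finrank (ZMod 2) ↥R = ℓ - s ∧ bad R := by simpa [B] using hR
      simp only [Finset.coe_bipartiteAbove, Set.mem_ofPred_eq, N, r, Finset.mem_filter,
        Finset.mem_univ, true_and]
      refine ⟨?_, ?_⟩
      · rw [← hR'.1]
        exact LinearEquiv.finrank_map_eq _ _
      · have : (R.map ((g f).symm : (Fin ℓ → ZMod 2) →ₗ[ZMod 2] (Fin ℓ → ZMod 2))).map
            (g f : (Fin ℓ → ZMod 2) →ₗ[ZMod 2] (Fin ℓ → ZMod 2)) = R := by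
          rw [← Submodule.map_comp]
          simp
        rw [this]
        exact hR'.2
    · exact (Submodule.map_injective_of_injective (g f).symm.injective).injOn
  · have hR' : Module.finrank (ZMod 2) ↥R = ℓ - s := by simpa [N] using hR
    let W : Submodule (ZMod 2) (Fin ℓ → ZMod 2) := R ⊓ Ej ℓ i
    have hW : Module.finrank (ZMod 2) W.dualAnnihilator ≤ ℓ + s - i := by
      have h1 := Subspace.finrank_add_finrank_dualAnnihilator_eq W
      have h2 := Submodule.finrank_sup_add_finrank_inf_eq R (Ej ℓ i)
      have h3 := Submodule.finrank_le (R ⊔ Ej ℓ i)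
      have h4 := le_finrank_Ej ℓ i hiℓ
      have h5 : Module.finrank (ZMod 2) (Fin ℓ → ZMod 2) = ℓ := by simp
      change Module.finrank (ZMod 2) W + _ = _ at h1
      change _ + Module.finrank (ZMod 2) W = _ at h2
      change _ ≤ Module.finrank (ZMod 2) (Fin ℓ → ZMod 2) at h3
      omega
    let _ : Fintype W.dualAnnihilator := Fintype.ofFinite _
    have hcard : Fintype.card W.dualAnnihilator ≤ 2 ^ (ℓ + s - i) := by
      rw [← Nat.card_eq_fintype_card, Module.natCard_eq_pow_finrank (K := ZMod 2), Nat.card_zmod]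
      exact Nat.pow_le_pow_right (by norm_num) hW
    refine le_trans ?_ hcard
    let S : Finset (Module.Dual (ZMod 2) (Fin ℓ → ZMod 2)) :=
      Finset.univ.map (Function.Embedding.subtype (· ∈ W.dualAnnihilator))
    have hS : S.card = Fintype.card W.dualAnnihilator := by simp [S]
    rw [← hS]
    refine Finset.card_le_card_of_injOn
      (fun f : D => (LinearMap.proj p : (Fin ℓ → ZMod 2) →ₗ[ZMod 2] ZMod 2) +
        (f : Module.Dual (ZMod 2) (Fin ℓ → ZMod 2)))
      (fun f hf => ?_) ?_
    · have hf' : bad (R.map (g f : (Fin ℓ → ZMod 2) →ₗ[ZMod 2] (Fin ℓ → ZMod 2))) := by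
        simpa [Finset.bipartiteBelow, r] using hf
      suffices h : (LinearMap.proj p : (Fin ℓ → ZMod 2) →ₗ[ZMod 2] ZMod 2) +
          (f : Module.Dual (ZMod 2) (Fin ℓ → ZMod 2)) ∈
          W.dualAnnihilator by simpa [S] using h
      rw [Submodule.mem_dualAnnihilator]
      rintro x ⟨hxR, hxE⟩
      have hgE : g f x ∈ Ej ℓ i := by
        rw [hg]
        refine Submodule.add_mem _ hxE (Submodule.smul_mem _ _ ?_)
        rw [mem_Ej_iff]
        intro k hk
        simp only [e]
        rw [Pi.single_apply, if_neg]
        rintro rfl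
        simp only [p] at hk
        omega
      have h := hf' _ (Submodule.mem_map_of_mem hxR) hgE
      have h2 := (mem_Ej_iff _ _ _).1 h p le_rfl
      have h3 : (g f x) p = x p + (f : Module.Dual (ZMod 2) (Fin ℓ → ZMod 2)) x := by
        rw [hg]; simp [e]
      rw [← h2]
      exact h3.symm
    · intro f _ f' _ h
      exact Subtype.ext (add_left_cancel h)

theorem pis_le_one (ℓ i s : ℕ) : pis ℓ i s ≤ 1 := by
  unfold pis
  refine div_le_one_of_le₀ ?_ (Nat.cast_nonneg _)
  refine Nat.cast_le.2 (Nat.card_le_card_of_injective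
    (fun R => (⟨R.1, R.2.1⟩ : {R : Submodule (ZMod 2) (Fin ℓ → ZMod 2) //
      Module.finrank (ZMod 2) ↥R = ℓ - s}))
    (fun R R' h => Subtype.ext (Subtype.mk.inj h)))

theorem pis_le_pow (ℓ i s : ℕ) (hi : 1 ≤ i) (hiℓ : i ≤ ℓ) (hs : s ≤ i) :
    pis ℓ i s ≤ 2 * (1 / 2) ^ (i - s) := by
  have h := card_avoiding_le ℓ i s hi hiℓ
  unfold pis
  refine div_le_of_le_mul₀ (Nat.cast_nonneg _) (by positivity) ?_
  set b := Nat.card {R : Submodule (ZMod 2) (Fin ℓ → ZMod 2) //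
      Module.finrank (ZMod 2) ↥R = ℓ - s ∧
      (R : Set (Fin ℓ → ZMod 2)) ∩ ((Ej ℓ i : Set (Fin ℓ → ZMod 2)) \
        (Ej ℓ (i - 1) : Set (Fin ℓ → ZMod 2))) = ∅}
  set n := Nat.card {R : Submodule (ZMod 2) (Fin ℓ → ZMod 2) //
      Module.finrank (ZMod 2) ↥R = ℓ - s}
  obtain ⟨d, rfl⟩ := Nat.exists_eq_add_of_le hs
  obtain ⟨c, rfl⟩ := Nat.exists_eq_add_of_le hiℓ
  obtain ⟨q, hq⟩ : ∃ q, s + d + c = q + 1 := ⟨s + d + c - 1, by omega⟩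
  have hR : (2 : ℝ) ^ (s + d + c - 1) * b ≤ n * 2 ^ (s + d + c + s - (s + d)) := by exact_mod_cast h
  rw [show s + d + c + s - (s + d) = c + s by omega, hq, Nat.add_sub_cancel] at hR
  rw [Nat.add_sub_cancel_left]
  have e1 : (2 : ℝ) ^ (c + s) * 2 ^ d = 2 ^ q * 2 := by
    rw [← pow_add, ← pow_succ]; congr 1; omega
  have e2 : ((1 : ℝ) / 2) ^ d * 2 ^ d = 1 := by rw [← mul_pow]; norm_num
  have hpos : (0 : ℝ) < 2 ^ q * 2 ^ d := by positivity
  refine le_of_mul_le_mul_left ?_ hpos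
  calc (2 : ℝ) ^ q * 2 ^ d * b = (2 ^ q * b) * 2 ^ d := by ring
    _ ≤ (n * 2 ^ (c + s)) * 2 ^ d := by gcongr
    _ = n * (2 ^ (c + s) * 2 ^ d) := by ring
    _ = n * (2 ^ q * 2) := by rw [e1]
    _ = 2 ^ q * (((1 : ℝ) / 2) ^ d * 2 ^ d) * (2 * n) := by rw [e2]; ring
    _ = _ := by ring

/-! ### The binomial tail -/

/-- Hoeffding's lemma for a Bernoulli variable of parameter `z`. -/
theorem bernoulli_mgf_le (z u : ℝ) (h0 : 0 ≤ z) (h1 : z ≤ 1) :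
    1 - z + z * Real.exp u ≤ Real.exp (u * z + u ^ 2 / 8) := by
  open MeasureTheory ProbabilityTheory in
  let μ : Measure ℝ := ENNReal.ofReal (1 - z) • Measure.dirac 0 + ENNReal.ofReal z • Measure.dirac 1
  have hE : ∀ f : ℝ → ℝ, ∫ x, f x ∂μ = (1 - z) * f 0 + z * f 1 := by
    intro f
    have hi : ∀ a : ℝ, Integrable f (Measure.dirac a) := fun a =>
      integrable_dirac (by simp)
    rw [integral_add_measure ((hi 0).smul_measure (by simp)) ((hi 1).smul_measure (by simp))]
    simp [integral_smul_measure, h0, h1]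
  have hp : IsProbabilityMeasure μ := by
    constructor
    simp only [μ, Measure.coe_add, Measure.coe_smul, Pi.add_apply, Pi.smul_apply, measure_univ,
      smul_eq_mul, mul_one]
    rw [← ENNReal.ofReal_add (by linarith) h0]
    simp
  have hb : ∀ᵐ x ∂μ, id x ∈ Set.Icc (0 : ℝ) 1 := by
    rw [ae_add_measure_iff]
    constructor <;> refine Measure.ae_smul_measure ?_ _ <;>
      rw [ae_dirac_iff (by exact measurableSet_Icc)] <;> simp
  have h := (hasSubgaussianMGF_of_mem_Icc (μ := μ) aemeasurable_id hb).mgf_le u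
  rw [mgf, hE, hE] at h
  norm_num at h
  have e : Real.exp (u * z + u ^ 2 / 8) = Real.exp (u * z) * Real.exp (1 / 4 * u ^ 2 / 2) := by
    rw [← Real.exp_add]; ring_nf
  have e1 : 1 - z + z * Real.exp u = Real.exp (u * z) *
      ((1 - z) * Real.exp (-(u * z)) + z * Real.exp (u * (1 - z))) := by
    have a1 : Real.exp (u * z) * Real.exp (-(u * z)) = 1 := by rw [← Real.exp_add]; simp
    have a2 : Real.exp (u * z) * Real.exp (u * (1 - z)) = Real.exp u := by
      rw [← Real.exp_add]; ring_nf
    linear_combination (-(1 - z)) * a1 - z * a2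
  rw [e, e1]
  gcongr

/-- Hoeffding's upper tail bound for the binomial distribution. -/
theorem binomial_tail_le (ℓ : ℕ) (z t a : ℝ) (h0 : 0 ≤ z) (h1 : z ≤ 1) (ht : 0 ≤ t)
    (ha : ℓ * (z + t) ≤ a) :
    ∑ s ∈ Finset.range (ℓ + 1),
      (if a ≤ (s : ℝ) then (Nat.choose ℓ s : ℝ) * z ^ s * (1 - z) ^ (ℓ - s) else 0) ≤
      Real.exp (-2 * ℓ * t ^ 2) := by
  have h1z : 0 ≤ 1 - z := by linarith
  -- Chernoff's method with parameter `4 * t`, the minimizer of `-u * t + u ^ 2 / 8`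
  calc _ ≤ ∑ s ∈ Finset.range (ℓ + 1), Real.exp (-(4 * t * a)) *
        ((z * Real.exp (4 * t)) ^ s * (1 - z) ^ (ℓ - s) * (Nat.choose ℓ s : ℝ)) := by
        refine Finset.sum_le_sum fun s _ => ?_
        have e : Real.exp (-(4 * t * a)) *
            ((z * Real.exp (4 * t)) ^ s * (1 - z) ^ (ℓ - s) * (Nat.choose ℓ s : ℝ)) =
            (Nat.choose ℓ s : ℝ) * z ^ s * (1 - z) ^ (ℓ - s) * Real.exp (4 * t * (s - a)) := by
          have : Real.exp (4 * t * (s - a)) = Real.exp (-(4 * t * a)) * Real.exp (4 * t) ^ s := by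
            rw [← Real.exp_nat_mul, ← Real.exp_add]; ring_nf
          rw [this, mul_pow]; ring
        rw [e]
        split_ifs with hs
        · refine le_mul_of_one_le_right (by positivity) (Real.one_le_exp ?_)
          have : 0 ≤ (s : ℝ) - a := by linarith
          positivity
        · positivity
    _ = Real.exp (-(4 * t * a)) * (1 - z + z * Real.exp (4 * t)) ^ ℓ := by
        rw [← Finset.mul_sum, ← add_pow, add_comm (1 - z)]
    _ ≤ Real.exp (-(4 * t * a)) * Real.exp (4 * t * z + (4 * t) ^ 2 / 8) ^ ℓ := by
        gcongr
        exact bernoulli_mgf_le z (4 * t) h0 h1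
    _ ≤ _ := by
        rw [← Real.exp_nat_mul, ← Real.exp_add]
        refine Real.exp_le_exp.2 ?_
        nlinarith [mul_le_mul_of_nonneg_left ha ht]

/-! ### The bound on the average erasure probability -/

theorem stmt15 (ℓ i : ℕ) (hℓ : 2 ≤ ℓ) (hi : 1 ≤ i) (hiℓ : i ≤ ℓ) (β δ : ℝ)
    (hβ : 0 < β) (hδ : 0 < δ) (z : ℝ) (hz : z ∈ Set.Ico (0 : ℝ) 1)
    (hzub : z < (i : ℝ) / ℓ -
        (⌊(δ * Real.logb 2 ℓ + Real.logb 2 6) / (Real.logb 2 3 - 1)⌋ : ℝ) / ℓ -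
      Real.sqrt (β * Real.log ℓ / (2 * ℓ))) :
    Favg ℓ i z < (ℓ : ℝ) ^ (-β) + (ℓ : ℝ) ^ (-δ) := by
  obtain ⟨h0, h1⟩ := hz
  have h1z : 0 ≤ 1 - z := by linarith
  have hℓ1 : (1 : ℝ) < ℓ := by exact_mod_cast hℓ
  have hℓ0 : (0 : ℝ) < ℓ := by linarith
  have hlog : 0 < Real.log ℓ := Real.log_pos hℓ1
  set x : ℝ := (δ * Real.logb 2 ℓ + Real.logb 2 6) / (Real.logb 2 3 - 1) with hx
  set t : ℝ := Real.sqrt (β * Real.log ℓ / (2 * ℓ)) with ht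
  have hL : 0 < Real.logb 2 ℓ := Real.logb_pos (by norm_num) hℓ1
  have hL6 : 0 < Real.logb 2 6 := Real.logb_pos (by norm_num) (by norm_num)
  have hL3 : 1 < Real.logb 2 3 := by
    rw [Real.lt_logb_iff_rpow_lt (by norm_num) (by norm_num)]; norm_num
  have hL3' : Real.logb 2 3 < 2 := by
    rw [Real.logb_lt_iff_lt_rpow (by norm_num) (by norm_num)]; norm_num
  have hnum : δ * Real.logb 2 ℓ + Real.logb 2 6 ≤ x := by
    rw [hx, le_div_iff₀ (by linarith)]
    nlinarith [mul_pos hδ hL]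
  have hx0 : 0 < x := by nlinarith [mul_pos hδ hL]
  have htail := binomial_tail_le ℓ z t (i - ⌊x⌋) h0 h1.le (Real.sqrt_nonneg _) (by
    have : (i : ℝ) / ℓ - (⌊x⌋ : ℝ) / ℓ = ((i : ℝ) - ⌊x⌋) / ℓ := by ring
    rw [this] at hzub
    have h2 : z + t < ((i : ℝ) - ⌊x⌋) / ℓ := by linarith
    rw [lt_div_iff₀ hℓ0] at h2
    linarith)
  have hβe : Real.exp (-2 * ℓ * t ^ 2) = (ℓ : ℝ) ^ (-β) := by
    rw [ht, Real.sq_sqrt (by positivity), Real.rpow_def_of_pos hℓ0]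
    congr 1
    field_simp
  rw [hβe] at htail
  -- for `s` below the cutoff, `i - s ≥ ⌊x⌋ + 1 > x`
  have hsmall : ∀ s : ℕ, ¬ ((i : ℝ) - ⌊x⌋ ≤ s) → pis ℓ i s ≤ (ℓ : ℝ) ^ (-δ) / 3 := by
    intro s hs
    have hs1 : (s : ℤ) < i - ⌊x⌋ := by
      have : (s : ℝ) < i - ⌊x⌋ := not_le.1 hs
      exact_mod_cast this
    have hfl : 0 ≤ ⌊x⌋ := Int.floor_nonneg.2 hx0.le
    have hsi : s ≤ i := by omega
    refine (pis_le_pow ℓ i s hi hiℓ hsi).trans ?_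
    have hxi : x ≤ ((i - s : ℕ) : ℝ) := by
      have a : ⌊x⌋ + 1 ≤ ((i - s : ℕ) : ℤ) := by omega
      have b : ((⌊x⌋ : ℝ) + 1) ≤ ((i - s : ℕ) : ℝ) := by exact_mod_cast a
      exact (Int.lt_floor_add_one x).le.trans b
    have c : (1 / 2 : ℝ) ^ (i - s) = (2 : ℝ) ^ (-((i - s : ℕ) : ℝ)) := by
      rw [Real.rpow_neg (by norm_num), Real.rpow_natCast, one_div, inv_pow]
    have d : (2 : ℝ) ^ (-((i - s : ℕ) : ℝ)) ≤
        (2 : ℝ) ^ (-(δ * Real.logb 2 ℓ + Real.logb 2 6)) :=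
      Real.rpow_le_rpow_of_exponent_le (by norm_num) (by linarith)
    have f : (2 : ℝ) ^ (-(δ * Real.logb 2 ℓ + Real.logb 2 6)) = (ℓ : ℝ) ^ (-δ) / 6 := by
      rw [show -(δ * Real.logb 2 ℓ + Real.logb 2 6) =
        Real.logb 2 ℓ * (-δ) - Real.logb 2 6 by ring, Real.rpow_sub (by norm_num),
        Real.rpow_mul (by norm_num), Real.rpow_logb (by norm_num) (by norm_num) hℓ0,
        Real.rpow_logb (by norm_num) (by norm_num) (by norm_num)]
    rw [c]
    linarith
  have hpos : 0 < (ℓ : ℝ) ^ (-δ) := Real.rpow_pos_of_pos hℓ0 _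
  have hsum : ∑ s ∈ Finset.range (ℓ + 1),
      (Nat.choose ℓ s : ℝ) * z ^ s * (1 - z) ^ (ℓ - s) = 1 := by
    have h := add_pow z (1 - z) ℓ
    rw [add_sub_cancel, one_pow] at h
    exact (Finset.sum_congr rfl fun s _ => by ring).trans h.symm
  calc Favg ℓ i z ≤ ∑ s ∈ Finset.range (ℓ + 1),
        ((if (i : ℝ) - ⌊x⌋ ≤ (s : ℝ) then
            (Nat.choose ℓ s : ℝ) * z ^ s * (1 - z) ^ (ℓ - s) else 0) +
          (Nat.choose ℓ s : ℝ) * z ^ s * (1 - z) ^ (ℓ - s) * ((ℓ : ℝ) ^ (-δ) / 3)) := by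
        unfold Favg
        refine Finset.sum_le_sum fun s _ => ?_
        have hw : 0 ≤ (Nat.choose ℓ s : ℝ) * z ^ s * (1 - z) ^ (ℓ - s) := by positivity
        split_ifs with hs
        · have := mul_le_mul_of_nonneg_left (pis_le_one ℓ i s) hw
          have : 0 ≤ (Nat.choose ℓ s : ℝ) * z ^ s * (1 - z) ^ (ℓ - s) * ((ℓ : ℝ) ^ (-δ) / 3) := by
            positivity
          linarith
        · have := mul_le_mul_of_nonneg_left (hsmall s hs) hw
          linarith
    _ ≤ (ℓ : ℝ) ^ (-β) + (ℓ : ℝ) ^ (-δ) / 3 := by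
        rw [Finset.sum_add_distrib, ← Finset.sum_mul, hsum, one_mul]
        linarith
    _ < _ := by linarith

end
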